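/- For every integer L ≥ 0, ∑_{m,n≥0} q^{(m²+n²)/2} [L−m choose n]_q [n choose m]_q = ∑_{j∈ℤ} (−1)^j q^{2j²+j/2} ( T_0(L,4j) + T_0(L,4j+1) ). -/

import Mathlib

open Finset

/-- The variable `q`, realized as the generator of the field of rational functions over `ℚ`. -/
noncomputable def qq : RatFunc ℚ := RatFunc.X

/-- `(x)_n = ∏_{j=1}^n (1 - x^j)`. -/
noncomputable def qPoch (x : RatFunc ℚ) (n : ℕ) : RatFunc ℚ :=
  ∏ j ∈ Finset.range n, (1 - x ^ (j + 1))

/-- Gaussian binomial coefficient `[n choose k]_x`, zero unless `0 ≤ k ≤ n`. -/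
noncomputable def qBin (x : RatFunc ℚ) (n k : ℤ) : RatFunc ℚ :=
  if 0 ≤ k ∧ k ≤ n then qPoch x n.toNat / (qPoch x k.toNat * qPoch x (n - k).toNat) else 0

/-- The `q`-trinomial coefficient `[L, b; a]_2` in base `x`. -/
noncomputable def qTri (x : RatFunc ℚ) (L : ℕ) (b a : ℤ) : RatFunc ℚ :=
  ∑ k ∈ Finset.range (L + 1),
    x ^ ((k : ℤ) * (k + b)) * qBin x (L : ℤ) (k : ℤ) * qBin x ((L : ℤ) - k) ((k : ℤ) + a)

/-- The `q`-trinomial `T_n(L, a)`, written in terms of `s = q^{1/2}` (so the base is `s^2`):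
`T_n(L,a) = ∑ s^{r(r-n)} (s²)_L / ((s²)_{(L-a-r)/2} (s²)_{(L+a-r)/2} (s²)_r)`,
the sum over `r ≥ 0` with `L - a - r` even and `r ≤ L - |a|`; zero for `|a| > L`. -/
noncomputable def qT (s : RatFunc ℚ) (n : ℤ) (L : ℕ) (a : ℤ) : RatFunc ℚ :=
  ∑ r ∈ Finset.range (L + 1),
    if Even ((L : ℤ) - a - r) ∧ (r : ℤ) ≤ (L : ℤ) - |a| then
      s ^ ((r : ℤ) * ((r : ℤ) - n)) * qPoch (s ^ 2) L /
        (qPoch (s ^ 2) (((L : ℤ) - a - r) / 2).toNat *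
          qPoch (s ^ 2) (((L : ℤ) + a - r) / 2).toNat * qPoch (s ^ 2) r)
    else 0

/-- The Cartan matrix of the Lie algebra `A_n`. -/
def cartanA (n : ℕ) (i j : Fin n) : ℤ :=
  if i = j then 2 else if |(i : ℤ) - (j : ℤ)| = 1 then -1 else 0

/-! ### Finite-support sums -/

def HasFS {ι : Type} (f : ι → RatFunc ℚ) (v : RatFunc ℚ) : Prop :=
  (Function.support f).Finite ∧ ∑ᶠ i, f i = v

lemma HasFS.unique {ι : Type} {f : ι → RatFunc ℚ} {v w : RatFunc ℚ}
    (h : HasFS f v) (h2 : HasFS f w) : v = w := h.2.symm.trans h2.2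

lemma HasFS.add {ι : Type} {f g : ι → RatFunc ℚ} {v w : RatFunc ℚ}
    (h : HasFS f v) (h2 : HasFS g w) : HasFS (fun i => f i + g i) (v + w) :=
  ⟨(h.1.union h2.1).subset (Function.support_add f g),
    by rw [finsum_add_distrib h.1 h2.1, h.2, h2.2]⟩

lemma HasFS.cmul {ι : Type} {f : ι → RatFunc ℚ} {v : RatFunc ℚ} (c : RatFunc ℚ)
    (h : HasFS f v) : HasFS (fun i => c * f i) (c * v) :=
  ⟨h.1.subset (fun i hi => by
      simp only [Function.mem_support] at hi ⊢
      exact right_ne_zero_of_mul hi), by rw [← h.2]; exact (mul_finsum _ _).symm⟩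

lemma HasFS.sub {ι : Type} {f g : ι → RatFunc ℚ} {v w : RatFunc ℚ}
    (h : HasFS f v) (h2 : HasFS g w) : HasFS (fun i => f i - g i) (v - w) := by
  have := h.add (h2.cmul (-1))
  simpa [sub_eq_add_neg] using this

lemma HasFS.shift {ι : Type} [AddGroup ι] {f : ι → RatFunc ℚ} {v : RatFunc ℚ} (c : ι)
    (h : HasFS f v) : HasFS (fun i => f (i + c)) v := by
  refine ⟨?_, ?_⟩
  · have := h.1.preimage (f := fun i => i + c) (fun a _ b _ hab => add_right_cancel hab)
    exact this
  · rw [← h.2]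
    exact finsum_comp_equiv (Equiv.addRight c)

lemma HasFS.of_finite {ι : Type} {f : ι → RatFunc ℚ} (h : (Function.support f).Finite) :
    HasFS f (∑ᶠ i, f i) := ⟨h, rfl⟩

/-! ### Basic facts on `qq` -/

lemma qq_ne : qq ≠ 0 := RatFunc.X_ne_zero

lemma one_sub_ne (n : ℕ) : (1 : RatFunc ℚ) - (qq ^ 2) ^ (n + 1) ≠ 0 := by
  intro h
  have h1 : (algebraMap (Polynomial ℚ) (RatFunc ℚ)) (1 - (Polynomial.X ^ 2) ^ (n + 1)) = 0 := by
    simpa [qq] using h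
  have h2 := (map_eq_zero_iff _ (RatFunc.algebraMap_injective ℚ)).1 h1
  have h3 := congrArg (Polynomial.eval 0) h2
  simp at h3

lemma qPoch_ne (n : ℕ) : qPoch (qq ^ 2) n ≠ 0 :=
  Finset.prod_ne_zero_iff.2 fun j _ => one_sub_ne j

lemma qPoch_succ (x : RatFunc ℚ) (n : ℕ) :
    qPoch x (n + 1) = qPoch x n * (1 - x ^ (n + 1)) := by
  simp [qPoch, Finset.prod_range_succ]

lemma qPoch_zero (x : RatFunc ℚ) : qPoch x 0 = 1 := by simp [qPoch]

/-- The inverse `q`-factorial, extended by zero. -/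
noncomputable def iP (n : ℤ) : RatFunc ℚ :=
  if 0 ≤ n then (qPoch (qq ^ 2) n.toNat)⁻¹ else 0

lemma iP_neg {n : ℤ} (h : n < 0) : iP n = 0 := by simp [iP, not_le.2 h]

lemma nonneg_of_iP {n : ℤ} (h : iP n ≠ 0) : 0 ≤ n := by
  by_contra h2
  exact h (iP_neg (not_le.1 h2))

lemma iP_sub (n : ℤ) : iP (n - 1) = (1 - qq ^ (2 * n)) * iP n := by
  rcases lt_trichotomy n 0 with h | h | h
  · rw [iP_neg h, iP_neg (by omega), mul_zero]
  · subst h; simp [iP_neg]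
  · obtain ⟨m, rfl⟩ : ∃ m : ℕ, n = (m : ℤ) + 1 := ⟨(n - 1).toNat, by omega⟩
    have e1 : ((m : ℤ) + 1).toNat = m + 1 := by omega
    have e2 : qq ^ (2 * ((m : ℤ) + 1)) = (qq ^ 2) ^ (m + 1) := by
      rw [← pow_mul, ← zpow_natCast]; push_cast; rfl
    have h0 : (0 : ℤ) ≤ (m : ℤ) + 1 := by omega
    simp only [iP, add_sub_cancel_right, h0, e1, e2, qPoch_succ, if_true, Int.natCast_nonneg,
      Int.toNat_natCast]
    have := one_sub_ne m
    have := qPoch_ne m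
    field_simp

/-! ### Trinomials without the prefactor -/

noncomputable def ut (n N a k : ℤ) : RatFunc ℚ :=
  qq ^ ((N - a - 2 * k) * (N - a - 2 * k - n)) * iP k * iP (k + a) * iP (N - a - 2 * k)

noncomputable def U (n N a : ℤ) : RatFunc ℚ := ∑ᶠ k, ut n N a k

lemma ut_supp {n N a k : ℤ} (h : ut n N a k ≠ 0) : 0 ≤ k ∧ 0 ≤ k + a ∧ 0 ≤ N - a - 2 * k := by
  unfold ut at h
  refine ⟨?_, ?_, ?_⟩
  · exact nonneg_of_iP (right_ne_zero_of_mul (left_ne_zero_of_mul (left_ne_zero_of_mul h)))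
  · exact nonneg_of_iP (right_ne_zero_of_mul (left_ne_zero_of_mul h))
  · exact nonneg_of_iP (right_ne_zero_of_mul h)

lemma hasU (n N a : ℤ) : HasFS (ut n N a) (U n N a) := by
  refine HasFS.of_finite ((Set.finite_Icc (0 : ℤ) |N - a|).subset fun k hk => ?_)
  obtain ⟨h1, _, h3⟩ := ut_supp hk
  exact ⟨h1, by have := le_abs_self (N - a); omega⟩

lemma U_zero {n N a : ℤ} (h : N < |a|) : U n N a = 0 := by
  have : ut n N a = fun _ => 0 := by
    funext k
    by_contra hk
    obtain ⟨h1, h2, h3⟩ := ut_supp hk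
    rcases abs_cases a with h | h <;> omega
  simp [U, this]

lemma U_symm (n N a : ℤ) : U n N (-a) = U n N a := by
  refine HasFS.unique ((hasU n N (-a)).shift a) ?_
  convert hasU n N a using 1
  funext k
  have e : N - -a - 2 * (k + a) = N - a - 2 * k := by ring
  have e2 : k + a + -a = k := by ring
  simp only [ut, e, e2]; ring

/-- The pointwise statements are polynomial identities in `qq ^ k` etc. -/
lemma zz (a b : ℤ) : qq ^ (a + b) = qq ^ a * qq ^ b := zpow_add₀ qq_ne a b

lemma relP0 (N a : ℤ) : (1 - qq ^ (2 * N)) * U 0 N a =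
    U 0 (N - 1) (a - 1) + qq ^ (N + a) * (U (-1) (N - 1) a + U (-1) (N - 1) (a + 1)) := by
  refine HasFS.unique ((hasU 0 N a).cmul _) ?_
  convert (hasU 0 (N - 1) (a - 1)).add
    (((hasU (-1) (N - 1) a).add ((hasU (-1) (N - 1) (a + 1)).shift (-1))).cmul (qq ^ (N + a)))
    using 1
  funext k
  obtain ⟨r, hr⟩ : ∃ r, r = N - a - 2 * k := ⟨_, rfl⟩
  have e1 : N - 1 - (a - 1) - 2 * k = r := by omega
  have e2 : N - 1 - a - 2 * k = r - 1 := by omega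
  have e3 : N - 1 - (a + 1) - 2 * (k + -1) = r := by omega
  have e4 : k + (a - 1) = k + a - 1 := by ring
  have e5 : k + -1 + (a + 1) = k + a := by ring
  have e6 : k + -1 = k - 1 := by ring
  have e7 : N = r + a + 2 * k := by omega
  simp only [ut, ← hr, e1, e2, e3, e4, e5]
  rw [e6, iP_sub, iP_sub, iP_sub, e7]
  have p1 : r * (r - 0) = r * r := by ring
  have p2 : (r - 1) * (r - 1 - -1) = r * r - r := by ring
  have p3 : r * (r - -1) = r * r + r := by ring
  have p4 : 2 * (r + a + 2 * k) = 2 * r + 2 * a + 4 * k := by ring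
  rw [p1, p2, p3, p4, show r + a + 2 * k + a = r + (a + a) + (k + k) by ring,
    show 2 * r = r + r by ring, show 2 * a = a + a by ring, show 4 * k = k + k + (k + k) by ring,
    show 2 * (k + a) = k + k + (a + a) by ring, show 2 * k = k + k by ring, sub_eq_add_neg (r * r)]
  simp only [zz, zpow_neg]
  have := zpow_ne_zero r qq_ne
  field_simp
  ring

lemma relP1 (N a : ℤ) : (1 - qq ^ (2 * N)) * U 1 N a =
    U (-1) (N - 1) a + U (-1) (N - 1) (a + 1) + qq ^ (N - a) * U 0 (N - 1) (a - 1) := by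
  refine HasFS.unique ((hasU 1 N a).cmul _) ?_
  convert ((hasU (-1) (N - 1) a).add ((hasU (-1) (N - 1) (a + 1)).shift (-1))).add
    ((hasU 0 (N - 1) (a - 1)).cmul (qq ^ (N - a))) using 1
  funext k
  obtain ⟨r, hr⟩ : ∃ r, r = N - a - 2 * k := ⟨_, rfl⟩
  have e1 : N - 1 - (a - 1) - 2 * k = r := by omega
  have e2 : N - 1 - a - 2 * k = r - 1 := by omega
  have e3 : N - 1 - (a + 1) - 2 * (k + -1) = r := by omega
  have e4 : k + (a - 1) = k + a - 1 := by ring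
  have e5 : k + -1 + (a + 1) = k + a := by ring
  have e6 : k + -1 = k - 1 := by ring
  have e7 : N = r + a + 2 * k := by omega
  simp only [ut, ← hr, e1, e2, e3, e4, e5]
  rw [e6, iP_sub, iP_sub, iP_sub, e7]
  have p0 : r * (r - 1) = r * r - r := by ring
  have p1 : r * (r - 0) = r * r := by ring
  have p2 : (r - 1) * (r - 1 - -1) = r * r - r := by ring
  have p3 : r * (r - -1) = r * r + r := by ring
  have p4 : 2 * (r + a + 2 * k) = 2 * r + 2 * a + 4 * k := by ring
  rw [p0, p1, p2, p3, p4, show r + a + 2 * k - a = r + (k + k) by ring,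
    show 2 * r = r + r by ring, show 2 * a = a + a by ring, show 4 * k = k + k + (k + k) by ring,
    show 2 * (k + a) = k + k + (a + a) by ring, show 2 * k = k + k by ring, sub_eq_add_neg (r * r)]
  simp only [zz, zpow_neg]
  have := zpow_ne_zero r qq_ne
  field_simp
  ring

lemma relM (N a : ℤ) : U (-1) N a + U (-1) N (a + 1) =
    U 1 N a + qq ^ (N + 1 + a) * U 0 N (a + 1) := by
  refine HasFS.unique ((hasU (-1) N a).add (hasU (-1) N (a + 1))) ?_
  convert (hasU 1 N a).add ((hasU 0 N (a + 1)).cmul (qq ^ (N + 1 + a))) using 1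
  funext k
  obtain ⟨r, hr⟩ : ∃ r, r = N - a - 2 * k := ⟨_, rfl⟩
  have e1 : N - (a + 1) - 2 * k = r - 1 := by omega
  have e4 : k + a = k + (a + 1) - 1 := by ring
  have e7 : N = r + a + 2 * k := by omega
  simp only [ut, ← hr, e1]
  rw [e4, iP_sub, iP_sub, e7]
  have p0 : r * (r - 1) = r * r - r := by ring
  have p1 : (r - 1) * (r - 1 - 0) = r * r - r - r + 1 := by ring
  have p2 : (r - 1) * (r - 1 - -1) = r * r - r := by ring
  have p3 : r * (r - -1) = r * r + r := by ring
  rw [p0, p1, p2, p3, show r + a + 2 * k + 1 + a = r + (k + k) + (a + a) + 1 by ring,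
    show 2 * r = r + r by ring, show 2 * (k + (a + 1)) = k + k + (a + a) + 1 + 1 by ring]
  simp only [sub_eq_add_neg, zz, zpow_neg, zpow_one]
  have := zpow_ne_zero r qq_ne
  field_simp
  ring

lemma relA (N a : ℤ) : U 1 N a - qq ^ (N - a) * U 0 N a =
    U 1 N (a + 1) - qq ^ (N + a + 1) * U 0 N (a + 1) := by
  -- the telescoping certificate
  let g : ℤ → RatFunc ℚ := fun k => (1 - qq ^ (2 * k)) *
    (qq ^ (N - a - 2 * k)) * ut 0 N a k
  have hg : HasFS g (∑ᶠ k, g k) := by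
    refine HasFS.of_finite ((hasU 0 N a).1.subset fun k hk => ?_)
    exact right_ne_zero_of_mul hk
  have h1 := ((hasU 1 N a).sub ((hasU 0 N a).cmul (qq ^ (N - a)))).sub
    (hg.sub (hg.shift 1))
  have h2 := (hasU 1 N (a + 1)).sub ((hasU 0 N (a + 1)).cmul (qq ^ (N + a + 1)))
  rw [sub_self, sub_zero] at h1
  refine h1.unique ?_
  convert h2 using 1
  funext k
  obtain ⟨r, hr⟩ : ∃ r, r = N - a - 2 * k := ⟨_, rfl⟩
  have e1 : N - (a + 1) - 2 * k = r - 1 := by omega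
  have e2 : N - a - 2 * (k + 1) = r - 1 - 1 := by omega
  have e4 : k + a = k + (a + 1) - 1 := by ring
  have e5 : k + 1 + a = k + (a + 1) := by ring
  have e8 : iP k = (1 - qq ^ (2 * (k + 1))) * iP (k + 1) := by
    rw [← iP_sub]; congr 1; ring
  have e7 : N = r + a + 2 * k := by omega
  simp only [g, ut, ← hr, e1, e2, e5]
  rw [e4, iP_sub (k + (a + 1)), iP_sub (r - 1), iP_sub r, e8, e7]
  have p0 : r * (r - 1) = r * r - r := by ring
  have p1 : (r - 1) * (r - 1 - 0) = r * r - r - r + 1 := by ring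
  have p2 : (r - 1) * (r - 1 - 1) = r * r - r - r - r + 1 + 1 := by ring
  have p3 : r * (r - 0) = r * r := by ring
  have p4 : (r - 1 - 1) * (r - 1 - 1 - 0) = r * r - r - r - r - r + 1 + 1 + 1 + 1 := by ring
  rw [p0, p1, p2, p3, p4, show r + a + 2 * k + a + 1 = r + (k + k) + (a + a) + 1 by ring,
    show r + a + 2 * k - a = r + (k + k) by ring, show 2 * (r - 1) = r + r - 1 - 1 by ring,
    show 2 * r = r + r by ring, show 2 * (k + (a + 1)) = k + k + (a + a) + 1 + 1 by ring,
    show 2 * (k + 1) = k + k + 1 + 1 by ring, show 2 * k = k + k by ring]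
  simp only [sub_eq_add_neg, zz, zpow_neg, zpow_one]
  have := zpow_ne_zero r qq_ne
  have := qq_ne
  field_simp
  ring

/-! ### The trinomials -/

noncomputable def T (n : ℤ) (L : ℕ) (a : ℤ) : RatFunc ℚ := qPoch (qq ^ 2) L * U n L a

lemma T_zero {n : ℤ} {L : ℕ} {a : ℤ} (h : (L : ℤ) < |a|) : T n L a = 0 := by
  simp [T, U_zero h]

lemma T_symm (n : ℤ) (L : ℕ) (a : ℤ) : T n L (-a) = T n L a := by
  simp [T, U_symm]

lemma qPoch_step (M : ℕ) :
    qPoch (qq ^ 2) (M + 1) = qPoch (qq ^ 2) M * (1 - qq ^ (2 * ((M : ℤ) + 1))) := by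
  have e2 : qq ^ (2 * ((M : ℤ) + 1)) = (qq ^ 2) ^ (M + 1) := by
    rw [← pow_mul, ← zpow_natCast]; push_cast; rfl
  rw [qPoch_succ, e2]

lemma T0_step (M : ℕ) (a : ℤ) : T 0 (M + 1) a = T 0 M (a - 1) +
    qq ^ ((M : ℤ) + 1 + a) * (T 1 M a + qq ^ ((M : ℤ) + 1 + a) * T 0 M (a + 1)) := by
  have h := relP0 ((M : ℤ) + 1) a
  rw [add_sub_cancel_right, relM] at h
  simp only [T, qPoch_step]
  push_cast
  linear_combination qPoch (qq ^ 2) M * h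

lemma T0_step' (M : ℕ) (a : ℤ) : T 0 (M + 1) a = T 0 M (a + 1) +
    qq ^ ((M : ℤ) + 1 - a) * (T 1 M a + qq ^ ((M : ℤ) + 1 - a) * T 0 M (a - 1)) := by
  have h := T0_step M (-a)
  rw [T_symm, T_symm, ← T_symm _ _ (-a - 1), ← T_symm _ _ (-a + 1)] at h
  rw [h, show -(-a - 1) = a + 1 by ring, show -(-a + 1) = a - 1 by ring, ← sub_eq_add_neg]

lemma T1_step (M : ℕ) (a : ℤ) : T 1 (M + 1) a = T 1 M a +
    qq ^ ((M : ℤ) + 1 + a) * T 0 M (a + 1) + qq ^ ((M : ℤ) + 1 - a) * T 0 M (a - 1) := by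
  have h := relP1 ((M : ℤ) + 1) a
  rw [add_sub_cancel_right, relM] at h
  simp only [T, qPoch_step]
  push_cast
  linear_combination qPoch (qq ^ 2) M * h

lemma T_A (M : ℕ) (a : ℤ) : T 1 M a - qq ^ ((M : ℤ) - a) * T 0 M a =
    T 1 M (a + 1) - qq ^ ((M : ℤ) + a + 1) * T 0 M (a + 1) := by
  simp only [T]
  linear_combination qPoch (qq ^ 2) M * relA M a

lemma T_diff (M : ℕ) (a : ℤ) : T 1 (M + 1) a - T 1 (M + 1) (a + 1) =
    qq ^ ((M : ℤ) + 1 - a) * T 0 M (a - 1) - qq ^ ((M : ℤ) + 1 + a + 1) * T 0 M (a + 2) := by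
  have h := T_A M a
  rw [T1_step, T1_step, add_sub_cancel_right, show a + 1 + 1 = a + 2 by ring,
    show (M : ℤ) + 1 - (a + 1) = M - a by ring, show (M : ℤ) + 1 + a = M + a + 1 by ring,
    show (M : ℤ) + 1 + (a + 1) = M + a + 1 + 1 by ring]
  linear_combination h

lemma qT_eq (n : ℤ) (L : ℕ) (a : ℤ) : qT qq n L a = T n L a := by
  classical
  let s : Finset ℕ := (Finset.range (L + 1)).filter
    fun r => Even ((L : ℤ) - a - r) ∧ (r : ℤ) ≤ (L : ℤ) - |a|
  have hs : Function.support (ut n L a) ⊆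
      ((s.image fun r : ℕ => ((L : ℤ) - a - r) / 2 : Finset ℤ) : Set ℤ) := by
    intro k hk
    obtain ⟨h1, h2, h3⟩ := ut_supp hk
    simp only [Finset.coe_image, Set.mem_image, Finset.mem_coe, s, Finset.mem_filter,
      Finset.mem_range]
    refine ⟨((L : ℤ) - a - 2 * k).toNat, ⟨by omega, ⟨k, by omega⟩, ?_⟩, by omega⟩
    rcases abs_cases a with h | h <;> omega
  rw [T, U, finsum_eq_sum_of_support_subset _ hs, Finset.sum_image, qT, ← Finset.sum_filter,
    Finset.mul_sum]
  · refine Finset.sum_congr rfl fun r hr => ?_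
    obtain ⟨h1, ⟨k, h2⟩, h3⟩ := Finset.mem_filter.1 hr
    have h4 : 0 ≤ k ∧ 0 ≤ k + a := by rcases abs_cases a with h | h <;> omega
    have e1 : ((L : ℤ) - a - r) / 2 = k := by omega
    have e2 : ((L : ℤ) + a - r) / 2 = k + a := by omega
    have e3 : (L : ℤ) - a - 2 * k = r := by omega
    rw [e1, e2, ut, e3]
    simp only [iP, h4.1, h4.2, if_true, Int.natCast_nonneg, Int.toNat_natCast]
    rw [div_eq_mul_inv, mul_inv, mul_inv]
    ring
  · intro r hr r' hr' h
    obtain ⟨h1, ⟨k, h2⟩, h3⟩ := Finset.mem_filter.1 hr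
    obtain ⟨h1', ⟨k', h2'⟩, h3'⟩ := Finset.mem_filter.1 hr'
    simp only at h
    omega

/-! ### The bosonic side -/

noncomputable def ww (j : ℤ) : RatFunc ℚ := (-1) ^ j * qq ^ (4 * j ^ 2 + j)

lemma ww_succ (j : ℤ) : ww (j + 1) = - (ww j * qq ^ (8 * j + 5)) := by
  unfold ww
  rw [zpow_add_one₀ (by norm_num), show 4 * (j + 1) ^ 2 + (j + 1) = 4 * j ^ 2 + j + (8 * j + 5) by
    ring, zz]
  ring

noncomputable def rt (L : ℕ) (j : ℤ) : RatFunc ℚ := ww j * (T 0 L (4 * j) + T 0 L (4 * j + 1))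

noncomputable def R (L : ℕ) : RatFunc ℚ := ∑ᶠ j, rt L j

lemma rt_supp (L : ℕ) : Function.support (rt L) ⊆ (Finset.Icc (-(L : ℤ)) (L : ℤ) : Set ℤ) := by
  intro j hj
  by_contra h
  simp only [Finset.coe_Icc, Set.mem_Icc, not_and_or, not_le] at h
  apply hj
  rw [rt, T_zero, T_zero, add_zero, mul_zero]
  · rcases abs_cases (4 * j + 1) with h | h <;> omega
  · rcases abs_cases (4 * j) with h | h <;> omega

lemma hasR (L : ℕ) : HasFS (rt L) (R L) :=
  HasFS.of_finite ((Finset.finite_toSet _).subset (rt_supp L))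

noncomputable def gt (K : ℕ) (j : ℤ) : RatFunc ℚ :=
  ww j * (qq ^ ((K : ℤ) + 2 - 4 * j) * T 1 (K + 1) (4 * j)
    + qq ^ (2 * ((K : ℤ) + 2) - 8 * j) * T 0 (K + 1) (4 * j - 1)
    - qq ^ (2 * (K : ℤ) + 3) * T 0 (K + 1) (4 * j) - qq ^ (2 * (K : ℤ) + 2) * T 0 K (4 * j))

lemma gt_fin (K : ℕ) : (Function.support (gt K)).Finite := by
  refine (Set.finite_Icc (-((K : ℤ) + 2)) (K + 2)).subset fun j hj => ?_
  by_contra h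
  simp only [Set.mem_Icc, not_and_or, not_le] at h
  apply hj
  have h1 : ((K + 1 : ℕ) : ℤ) < |4 * j| := by
    rcases abs_cases (4 * j) with h | h <;> push_cast <;> omega
  have h2 : ((K + 1 : ℕ) : ℤ) < |4 * j - 1| := by
    rcases abs_cases (4 * j - 1) with h | h <;> push_cast <;> omega
  rw [gt, T_zero h1, T_zero h1, T_zero h2, T_zero (by push_cast at h1; omega)]
  ring

lemma R_point (K : ℕ) (j : ℤ) :
    rt (K + 2) j - (1 + qq ^ (2 * (K : ℤ) + 3)) * rt (K + 1) j - qq ^ (2 * (K : ℤ) + 2) * rt K j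
      = gt K j - gt K (j + 1) := by
  have a1 := T0_step' (K + 1) (4 * j)
  have a2 := T0_step (K + 1) (4 * j + 1)
  have b1 := T_A (K + 1) (4 * j + 1)
  have b2 := T_diff K (4 * j + 2)
  have b3 := T_A (K + 1) (4 * j + 3)
  simp only [rt, gt, ww_succ]
  rw [show K + 2 = K + 1 + 1 by rfl, a1, a2]
  push_cast at *
  rw [show 4 * (j + 1) = 4 * j + 4 by ring, show 4 * j + 4 - 1 = 4 * j + 3 by ring] 
  simp only [show 4 * j + 1 - 1 = 4 * j by ring, show 4 * j + 1 + 1 = 4 * j + 2 by ring,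
    show 4 * j + 2 - 1 = 4 * j + 1 by ring, show 4 * j + 2 + 2 = 4 * j + 4 by ring,
    show 4 * j + 2 + 1 = 4 * j + 3 by ring, show 4 * j + 3 + 1 = 4 * j + 4 by ring] at *
  obtain ⟨s, hs⟩ : ∃ s, s = qq := ⟨_, rfl⟩
  obtain ⟨v, hv⟩ : ∃ v, v = qq ^ (K : ℤ) := ⟨_, rfl⟩
  obtain ⟨b, hb⟩ : ∃ b, b = qq ^ (4 * j) := ⟨_, rfl⟩
  have hs0 : s ≠ 0 := hs ▸ qq_ne
  have hb0 : b ≠ 0 := hb ▸ zpow_ne_zero _ qq_ne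
  have hv0 : v ≠ 0 := hv ▸ zpow_ne_zero _ qq_ne
  have key : ∀ x y z : ℤ, qq ^ (x * (K : ℤ) + y * (4 * j) + z) = v ^ x * b ^ y * s ^ z := by
    intro x y z
    rw [zz, zz, mul_comm x, mul_comm y, zpow_mul, zpow_mul, hv, hb, hs]
  rw [show (K : ℤ) + 1 + 1 - 4 * j = 1 * K + (-1) * (4 * j) + 2 by ring,
    show (K : ℤ) + 1 + 1 + (4 * j + 1) = 1 * K + 1 * (4 * j) + 3 by ring,
    show 2 * (K : ℤ) + 3 = 2 * K + 0 * (4 * j) + 3 by ring,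
    show 2 * (K : ℤ) + 2 = 2 * K + 0 * (4 * j) + 2 by ring,
    show (K : ℤ) + 2 - 4 * j = 1 * K + (-1) * (4 * j) + 2 by ring,
    show 2 * ((K : ℤ) + 2) - 8 * j = 2 * K + (-2) * (4 * j) + 4 by ring,
    show 8 * j + 5 = 0 * (K : ℤ) + 2 * (4 * j) + 5 by ring,
    show (K : ℤ) + 2 - (4 * j + 4) = 1 * K + (-1) * (4 * j) + (-2) by ring,
    show 2 * ((K : ℤ) + 2) - 8 * (j + 1) = 2 * K + (-2) * (4 * j) + (-4) by ring]
  rw [show (K : ℤ) + 1 - (4 * j + 1) = 1 * K + (-1) * (4 * j) + 0 by ring,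
    show (K : ℤ) + 1 + (4 * j + 1) + 1 = 1 * K + 1 * (4 * j) + 3 by ring] at b1
  rw [show (K : ℤ) + 1 - (4 * j + 2) = 1 * K + (-1) * (4 * j) + (-1) by ring,
    show (K : ℤ) + 1 + (4 * j + 2) + 1 = 1 * K + 1 * (4 * j) + 4 by ring] at b2
  rw [show (K : ℤ) + 1 - (4 * j + 3) = 1 * K + (-1) * (4 * j) + (-2) by ring,
    show (K : ℤ) + 1 + (4 * j + 3) + 1 = 1 * K + 1 * (4 * j) + 5 by ring] at b3
  simp only [key] at b1 b2 b3 ⊢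
  clear key a1 a2 hs hv hb
  have c : ww j * (v * b * s ^ 3) * _ = ww j * (v * b * s ^ 3) * _ :=
    congrArg _ (congrArg₂ (· + ·) (congrArg₂ (· + ·) b1 b2) b3)
  rw [← sub_eq_zero] at c ⊢
  rw [← c]
  simp only [zpow_neg, zpow_one, zpow_zero, zpow_ofNat]
  field_simp
  ring

lemma R_rec (K : ℕ) :
    R (K + 2) = (1 + qq ^ (2 * (K : ℤ) + 3)) * R (K + 1) + qq ^ (2 * (K : ℤ) + 2) * R K := by
  have hg := HasFS.of_finite (gt_fin K)
  have h1 := hg.sub (hg.shift 1)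
  have h2 := ((hasR (K + 2)).sub ((hasR (K + 1)).cmul (1 + qq ^ (2 * (K : ℤ) + 3)))).sub
    ((hasR K).cmul (qq ^ (2 * (K : ℤ) + 2)))
  simp only [R_point] at h2
  have := h2.unique h1
  linear_combination this

/-! ### The fermionic side -/

lemma qBin_eq (n k : ℤ) : qBin (qq ^ 2) n k = qPoch (qq ^ 2) n.toNat * iP k * iP (n - k) := by
  unfold qBin iP
  split_ifs <;> first | omega | simp [div_eq_mul_inv, mul_assoc, mul_comm]

lemma qBin_pascal1 {n : ℤ} (hn : n ≠ 0) (k : ℤ) : qBin (qq ^ 2) n k =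
    qBin (qq ^ 2) (n - 1) k + qq ^ (2 * (n - k)) * qBin (qq ^ 2) (n - 1) (k - 1) := by
  rcases lt_or_gt_of_ne hn with h | h
  · rw [qBin, qBin, qBin, if_neg (by omega), if_neg (by omega), if_neg (by omega)]; simp
  · obtain ⟨m, rfl⟩ : ∃ m : ℕ, n = (m : ℤ) + 1 := ⟨(n - 1).toNat, by omega⟩
    have e1 : ((m : ℤ) + 1).toNat = m + 1 := by omega
    simp only [qBin_eq, add_sub_cancel_right, e1, Int.toNat_natCast, qPoch_step]
    rw [show (m : ℤ) - k = m + 1 - k - 1 by ring, show (m : ℤ) - (k - 1) = m + 1 - k by ring,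
      iP_sub, iP_sub, show 2 * ((m : ℤ) + 1) = 2 * (m + 1 - k) + 2 * k by ring, zz]
    ring

lemma qBin_pascal2 {n : ℤ} (hn : n ≠ 0) (k : ℤ) : qBin (qq ^ 2) n k =
    qBin (qq ^ 2) (n - 1) (k - 1) + qq ^ (2 * k) * qBin (qq ^ 2) (n - 1) k := by
  rcases lt_or_gt_of_ne hn with h | h
  · rw [qBin, qBin, qBin, if_neg (by omega), if_neg (by omega), if_neg (by omega)]; simp
  · obtain ⟨m, rfl⟩ : ∃ m : ℕ, n = (m : ℤ) + 1 := ⟨(n - 1).toNat, by omega⟩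
    have e1 : ((m : ℤ) + 1).toNat = m + 1 := by omega
    simp only [qBin_eq, add_sub_cancel_right, e1, Int.toNat_natCast, qPoch_step]
    rw [show (m : ℤ) - k = m + 1 - k - 1 by ring, show (m : ℤ) - (k - 1) = m + 1 - k by ring,
      iP_sub, iP_sub, show 2 * ((m : ℤ) + 1) = 2 * (m + 1 - k) + 2 * k by ring, zz]
    ring

lemma qBin_zero {n k : ℤ} (h : ¬ (0 ≤ k ∧ k ≤ n)) : qBin (qq ^ 2) n k = 0 := if_neg h

noncomputable def dt (L : ℤ) (p : ℤ × ℤ) : RatFunc ℚ :=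
  qq ^ (p.1 ^ 2 + p.2 ^ 2) * qBin (qq ^ 2) (L - p.1) p.2 * qBin (qq ^ 2) p.2 p.1

noncomputable def D (L : ℤ) : RatFunc ℚ := ∑ᶠ p, dt L p

lemma dt_supp {L : ℤ} {p : ℤ × ℤ} (h : dt L p ≠ 0) : 0 ≤ p.1 ∧ p.1 ≤ p.2 ∧ p.2 ≤ L - p.1 := by
  by_contra h2
  apply h
  unfold dt
  by_cases h3 : 0 ≤ p.1 ∧ p.1 ≤ p.2
  · rw [qBin_zero (n := L - p.1) (by omega)]; ring
  · rw [qBin_zero (n := p.2) h3]; ring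

lemma hasD (L : ℤ) : HasFS (dt L) (D L) := by
  refine HasFS.of_finite (((Set.finite_Icc (0 : ℤ) |L|).prod (Set.finite_Icc (0 : ℤ) |L|)).subset
    fun p hp => ?_)
  have := dt_supp hp
  have := le_abs_self L
  simp only [Set.mem_prod, Set.mem_Icc]
  omega

lemma D_point (L : ℤ) (hL : 1 ≤ L) (p : ℤ × ℤ) :
    dt L p = dt (L - 1) p + qq ^ (2 * L - 1) * dt (L - 1) (p + (0, -1)) +
      qq ^ (2 * L - 2) * dt (L - 2) (p + (-1, -1)) := by
  obtain ⟨m, n⟩ := p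
  simp only [dt, Prod.mk_add_mk, add_zero, ← sub_eq_add_neg]
  rw [show L - 2 - (m - 1) = L - 1 - m by ring, show L - 1 - m = L - m - 1 by ring]
  by_cases hn : n = 0
  · subst hn
    rw [qBin_zero (k := 0 - 1) (by omega)]
    by_cases hm : L - m = 0
    · rw [qBin_zero (n := 0) (k := m) (by omega)]; ring
    · rw [qBin_pascal1 hm, qBin_zero (k := 0 - 1) (by omega)]; ring
  · by_cases hm : L - m = 0
    · rw [hm, qBin_zero (n := 0) (k := n) (by omega), qBin_zero (n := 0 - 1) (k := n) (by omega),
        qBin_zero (n := 0 - 1) (k := n - 1) (by omega)]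
      ring
    · rw [qBin_pascal1 hm n, mul_add, add_mul, add_assoc, qBin_pascal2 hn m]
      congr 1
      have h1 : qq ^ (m ^ 2 + n ^ 2) * qq ^ (2 * (L - m - n)) * qq ^ (2 * m) =
          qq ^ (2 * L - 1) * qq ^ (m ^ 2 + (n - 1) ^ 2) := by
        rw [← zz, ← zz, ← zz]; congr 1; ring
      have h2 : qq ^ (m ^ 2 + n ^ 2) * qq ^ (2 * (L - m - n)) =
          qq ^ (2 * L - 2) * qq ^ ((m - 1) ^ 2 + (n - 1) ^ 2) := by
        rw [← zz, ← zz]; congr 1; ring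
      linear_combination qBin (qq ^ 2) (L - m - 1) (n - 1) * qBin (qq ^ 2) (n - 1) m * h1
        + qBin (qq ^ 2) (L - m - 1) (n - 1) * qBin (qq ^ 2) (n - 1) (m - 1) * h2

lemma D_rec (K : ℕ) : D ((K + 2 : ℕ) : ℤ) = (1 + qq ^ (2 * (K : ℤ) + 3)) * D ((K + 1 : ℕ) : ℤ)
    + qq ^ (2 * (K : ℤ) + 2) * D (K : ℤ) := by
  push_cast
  have h := ((hasD ((K : ℤ) + 2 - 1)).add
    (((hasD ((K : ℤ) + 2 - 1)).shift (0, -1)).cmul (qq ^ (2 * ((K : ℤ) + 2) - 1)))).add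
    (((hasD ((K : ℤ) + 2 - 2)).shift (-1, -1)).cmul (qq ^ (2 * ((K : ℤ) + 2) - 2)))
  simp only [← D_point ((K : ℤ) + 2) (by omega)] at h
  rw [(hasD ((K : ℤ) + 2)).unique h, show (K : ℤ) + 2 - 1 = K + 1 by ring,
    show (K : ℤ) + 2 - 2 = K by ring, show 2 * ((K : ℤ) + 2) - 1 = 2 * K + 3 by ring,
    show 2 * ((K : ℤ) + 2) - 2 = 2 * K + 2 by ring]
  ring

/-! ### Matching the finite sums -/

lemma lhs_eq (L : ℕ) : ∑ m ∈ Finset.range (L + 1), ∑ n ∈ Finset.range (L + 1),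
        qq ^ (m ^ 2 + n ^ 2) * qBin (qq ^ 2) ((L : ℤ) - m) (n : ℤ) *
          qBin (qq ^ 2) (n : ℤ) (m : ℤ) = D L := by
  classical
  have hs : Function.support (dt L) ⊆
      (((Finset.range (L + 1) ×ˢ Finset.range (L + 1)).image
        fun p : ℕ × ℕ => ((p.1 : ℤ), (p.2 : ℤ)) : Finset (ℤ × ℤ)) : Set (ℤ × ℤ)) := by
    intro p hp
    have := dt_supp hp
    simp only [Finset.coe_image, Set.mem_image, Finset.mem_coe, Finset.mem_product,
      Finset.mem_range]
    exact ⟨(p.1.toNat, p.2.toNat), by omega, by ext <;> simp <;> omega⟩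
  rw [D, finsum_eq_sum_of_support_subset _ hs, Finset.sum_image, Finset.sum_product]
  · refine Finset.sum_congr rfl fun m _ => Finset.sum_congr rfl fun n _ => ?_
    simp only [dt]
    congr 2
  · intro p _ p' _ h
    simp only [Prod.mk.injEq, Nat.cast_inj] at h
    exact Prod.ext h.1 h.2

lemma rhs_eq (L : ℕ) : ∑ j ∈ Finset.Icc (-(L : ℤ)) (L : ℤ),
        (-1 : RatFunc ℚ) ^ j * qq ^ (4 * j ^ 2 + j) *
          (qT qq 0 L (4 * j) + qT qq 0 L (4 * j + 1)) = R L := by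
  rw [R, finsum_eq_sum_of_support_subset _ (rt_supp L)]
  simp only [rt, ww, qT_eq]

lemma base0 : D ((0 : ℕ) : ℤ) = R 0 := by
  rw [← lhs_eq, ← rhs_eq]
  simp [qT, qBin, qPoch]

lemma base1 : D ((1 : ℕ) : ℤ) = R 1 := by
  have h2 := one_sub_ne 0
  simp only [zero_add, pow_one] at h2
  rw [← lhs_eq, ← rhs_eq,
    show Finset.Icc (-((1 : ℕ) : ℤ)) ((1 : ℕ) : ℤ) = {-1, 0, 1} by decide]
  simp [qT, qBin, qPoch, Finset.sum_range_succ, Int.even_iff, h2]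
  exact add_comm _ _

lemma D_eq_R (L : ℕ) : D (L : ℤ) = R L := by
  induction L using Nat.twoStepInduction with
  | zero => exact base0
  | one => exact base1
  | more K h1 h2 => rw [D_rec, R_rec, h1, h2]

theorem stmt12 (L : ℕ) :
    ∑ m ∈ Finset.range (L + 1), ∑ n ∈ Finset.range (L + 1),
        qq ^ (m ^ 2 + n ^ 2) * qBin (qq ^ 2) ((L : ℤ) - m) (n : ℤ) *
          qBin (qq ^ 2) (n : ℤ) (m : ℤ) =
      ∑ j ∈ Finset.Icc (-(L : ℤ)) (L : ℤ),
        (-1 : RatFunc ℚ) ^ j * qq ^ (4 * j ^ 2 + j) *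
          (qT qq 0 L (4 * j) + qT qq 0 L (4 * j + 1)) := by
  
  rw [lhs_eq, rhs_eq, D_eq_R]
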